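/- For every integer k ≥ 2, the highest-order edge basis function φ_k := curl(p̂_{k+1}^0(x/(1−y)) (1−y)^{k+1}) on the reference triangle is L²-orthogonal to all vector-valued polynomials of degree at most k−2: for every polynomial map q : ℝ² → ℝ² whose components have total degree ≤ k−2 one has ∫_{T̂₂} φ_k(x,y) · q(x,y) d(x,y) = 0. -/

import Mathlib

open MeasureTheory

/-- Jacobi polynomial with parameters `(α, 0)`, via the Rodrigues formula. -/
noncomputable def jacobiP (α : ℝ) (n : ℕ) (x : ℝ) : ℝ :=
  1 / (2 ^ n * (n.factorial : ℝ) * (1 - x) ^ α) *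
    iteratedDeriv n (fun t : ℝ => (1 - t) ^ α * (t ^ 2 - 1) ^ n) x

/-- Integrated Jacobi polynomial `p̂_n^α`. -/
noncomputable def jacobiPhat (α : ℝ) (n : ℕ) (x : ℝ) : ℝ :=
  if n = 0 then 1 else ∫ ξ in (-1 : ℝ)..x, jacobiP α (n - 1) ξ

/-- Two-dimensional curl of a scalar field: `curl ψ = (∂_y ψ, -∂_x ψ)`. -/
noncomputable def curl2 (ψ : ℝ × ℝ → ℝ) (p : ℝ × ℝ) : ℝ × ℝ :=
  (deriv (fun y => ψ (p.1, y)) p.2, -deriv (fun x => ψ (x, p.2)) p.1)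

/-- Euclidean dot product on `ℝ × ℝ`. -/
noncomputable def dot2 (a b : ℝ × ℝ) : ℝ := a.1 * b.1 + a.2 * b.2

/-- The reference triangle `T̂₂`, the convex hull of `(-1,0)`, `(1,0)`, `(0,1)`. -/
def refTriangle : Set (ℝ × ℝ) := {p | 0 ≤ p.2 ∧ p.2 ≤ 1 ∧ |p.1| ≤ 1 - p.2}

/-- The highest-order edge basis function
`φ_k = curl (p̂_{k+1}^0(x/(1-y)) (1-y)^{k+1})`. -/
noncomputable def phiTop (k : ℕ) : ℝ × ℝ → ℝ × ℝ :=
  curl2 fun q => jacobiPhat 0 (k + 1) (q.1 / (1 - q.2)) * (1 - q.2) ^ (k + 1)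

/-- The polynomial `(X² - 1)^k` of the Rodrigues formula. -/
noncomputable def rodW (k : ℕ) : Polynomial ℝ := (Polynomial.X ^ 2 - 1) ^ k

theorem rodW_root (k i : ℕ) (h : i < k) (x : ℝ) (hx : x ^ 2 = 1) :
    (Polynomial.derivative^[i] (rodW k)).eval x = 0 := by
  obtain ⟨r, hr⟩ := Polynomial.pow_sub_dvd_iterate_derivative_pow
    (Polynomial.X ^ 2 - 1 : Polynomial ℝ) k i
  unfold rodW
  rw [hr]
  have : k - i ≠ 0 := by omega
  simp [hx, this]

theorem rodW_orth (k j : ℕ) (hj : j ≤ k) (q : Polynomial ℝ) (hq : q.degree < j) :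
    ∫ t in (-1 : ℝ)..1, q.eval t * (Polynomial.derivative^[j] (rodW k)).eval t = 0 := by
  induction j generalizing q with
  | zero =>
    have : q = 0 := by
      by_contra h
      have := Polynomial.zero_le_degree_iff.2 h
      exact absurd hq (not_lt.2 (by simpa using this))
    simp [this]
  | succ j ih =>
    have key := intervalIntegral.integral_mul_deriv_eq_deriv_mul (a := (-1 : ℝ)) (b := 1)
      (u := fun t => q.eval t) (u' := fun t => q.derivative.eval t)
      (v := fun t => (Polynomial.derivative^[j] (rodW k)).eval t)
      (v' := fun t => (Polynomial.derivative^[j+1] (rodW k)).eval t)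
      (fun x _ => q.hasDerivAt x)
      (fun x _ => by
        rw [Function.iterate_succ_apply']
        exact Polynomial.hasDerivAt _ x)
      ((Polynomial.continuous _).intervalIntegrable _ _)
      ((Polynomial.continuous _).intervalIntegrable _ _)
    rw [key, rodW_root k j (by omega) 1 (by norm_num),
      rodW_root k j (by omega) (-1) (by norm_num), ih (by omega)]
    · simp
    · by_cases h0 : q = 0
      · subst h0; simp
      · have h1 := Polynomial.degree_derivative_lt h0
        by_cases h2 : Polynomial.derivative q = 0
        · rw [h2]; simp
        · rw [Polynomial.degree_eq_natDegree h2, Polynomial.degree_eq_natDegree h0] at *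
          norm_cast at *
          omega

/-- Legendre polynomial. -/
noncomputable def legP (k : ℕ) : Polynomial ℝ :=
  Polynomial.C (1 / (2 ^ k * (k.factorial : ℝ))) * Polynomial.derivative^[k] (rodW k)

/-- Integrated Legendre polynomial. -/
noncomputable def legL (k : ℕ) : Polynomial ℝ :=
  Polynomial.C (1 / (2 ^ k * (k.factorial : ℝ))) * Polynomial.derivative^[k-1] (rodW k)

theorem iteratedDeriv_poly (p : Polynomial ℝ) (n : ℕ) :
    iteratedDeriv n (fun t => p.eval t) = fun t => (Polynomial.derivative^[n] p).eval t := by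
  induction n with
  | zero => simp
  | succ n ih =>
    rw [iteratedDeriv_succ, ih, Function.iterate_succ_apply']
    funext t
    exact Polynomial.deriv _

theorem jacobiP_eq (k : ℕ) (x : ℝ) : jacobiP 0 k x = (legP k).eval x := by
  have h : (fun t : ℝ => (1 - t) ^ (0 : ℝ) * (t ^ 2 - 1) ^ k) = fun t => (rodW k).eval t := by
    funext t; simp [rodW]
  unfold jacobiP legP
  rw [h, iteratedDeriv_poly]
  simp

theorem legL_deriv (k : ℕ) (hk : 1 ≤ k) : Polynomial.derivative (legL k) = legP k := by
  obtain ⟨m, rfl⟩ : ∃ m, k = m + 1 := ⟨k - 1, by omega⟩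
  unfold legL legP
  rw [Polynomial.derivative_C_mul, ← Function.iterate_succ_apply' Polynomial.derivative]
  rfl

theorem jacobiPhat_eq (k : ℕ) (hk : 1 ≤ k) (x : ℝ) :
    jacobiPhat 0 (k + 1) x = (legL k).eval x := by
  unfold jacobiPhat
  rw [if_neg (by omega)]
  simp only [jacobiP_eq, Nat.add_sub_cancel]
  rw [intervalIntegral.integral_eq_sub_of_hasDerivAt (f := fun t => (legL k).eval t)]
  · have : (legL k).eval (-1) = 0 := by
      unfold legL
      rw [Polynomial.eval_mul, rodW_root k _ (by omega) (-1) (by norm_num), mul_zero]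
    rw [this, sub_zero]
  · intro t _
    rw [← legL_deriv k hk]
    exact Polynomial.hasDerivAt _ t
  · exact (Polynomial.continuous _).intervalIntegrable _ _

theorem phiTop_eq (k : ℕ) (hk : 1 ≤ k) (x y : ℝ) (hy : y < 1) :
    phiTop k (x, y) =
      ((1 - y) ^ k * (x / (1 - y) * (legP k).eval (x / (1 - y))
          - (k + 1) * (legL k).eval (x / (1 - y))),
        -((1 - y) ^ k * (legP k).eval (x / (1 - y)))) := by
  have hs : (1 - y) ≠ 0 := by linarith
  have hL : ∀ t, HasDerivAt (fun t => (legL k).eval t) ((legP k).eval t) t := by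
    intro t
    rw [← legL_deriv k hk]
    exact Polynomial.hasDerivAt _ t
  unfold phiTop curl2
  simp only [jacobiPhat_eq k hk]
  refine Prod.ext ?_ ?_
  · simp only
    have h1 : HasDerivAt (fun y : ℝ => 1 - y) (-1) y := by
      simpa using (hasDerivAt_id y).const_sub 1
    have h2 : HasDerivAt (fun y : ℝ => x / (1 - y)) (x / (1 - y) ^ 2) y := by
      have := (hasDerivAt_const y x).div h1 hs
      refine this.congr_deriv ?_
      ring
    have h3 := ((hL (x / (1 - y))).comp y h2).mul (h1.pow (k + 1))
    refine (HasDerivAt.deriv h3).trans ?_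
    simp only [Function.comp]
    push_cast
    simp only [Pi.pow_apply]
    field_simp
    ring
  · simp only
    have h2 : HasDerivAt (fun x : ℝ => x / (1 - y)) (1 / (1 - y)) x :=
      (hasDerivAt_id x).div_const _
    have h3 := ((hL (x / (1 - y))).comp x h2).mul_const ((1 - y) ^ (k + 1))
    congr 1
    refine (HasDerivAt.deriv h3).trans ?_
    rw [pow_succ]
    field_simp

theorem subst_poly (q : MvPolynomial (Fin 2) ℝ) (d : ℕ) (hd : q.totalDegree ≤ d) (s y : ℝ)
    (hs : s ≠ 0) :
    ∃ Q : Polynomial ℝ, Q.natDegree ≤ d ∧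
      ∀ x, MvPolynomial.eval ![x, y] q = Q.eval (x / s) := by
  refine ⟨MvPolynomial.aeval ![Polynomial.C s * Polynomial.X, Polynomial.C y] q, ?_, ?_⟩
  · have := MvPolynomial.aeval_natDegree_le (n := 1) q hd
      ![Polynomial.C s * Polynomial.X, Polynomial.C y] (by
        intro i
        fin_cases i
        · exact (Polynomial.natDegree_C_mul_le s Polynomial.X).trans Polynomial.natDegree_X_le
        · simp)
    simpa using this
  · intro x
    rw [← Polynomial.coe_evalRingHom, MvPolynomial.aeval_def, MvPolynomial.hom_eval₂]
    change MvPolynomial.eval₂ (RingHom.id ℝ) ![x, y] q = _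
    congr 1
    · ext; simp
    · funext i
      fin_cases i
      · simp; field_simp
      · simp

theorem inner_zero (k : ℕ) (hk : 2 ≤ k) (q₁ q₂ : MvPolynomial (Fin 2) ℝ)
    (h₁ : q₁.totalDegree ≤ k - 2) (h₂ : q₂.totalDegree ≤ k - 2) (y : ℝ) (hy : y < 1) :
    ∫ x in (-(1 - y))..(1 - y), dot2 (phiTop k (x, y))
          (MvPolynomial.eval ![x, y] q₁, MvPolynomial.eval ![x, y] q₂) = 0 := by
  have hs : (1 - y) ≠ 0 := by linarith
  obtain ⟨Q₁, d1, e1⟩ := subst_poly q₁ _ h₁ (1 - y) y hs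
  obtain ⟨Q₂, d2, e2⟩ := subst_poly q₂ _ h₂ (1 - y) y hs
  set c : ℝ := (1 - y) ^ k * (1 / (2 ^ k * (k.factorial : ℝ))) with hc
  have hf : ∀ x, dot2 (phiTop k (x, y))
      (MvPolynomial.eval ![x, y] q₁, MvPolynomial.eval ![x, y] q₂) =
      (fun t => c * ((Polynomial.X * Q₁ - Q₂).eval t *
          (Polynomial.derivative^[k] (rodW k)).eval t)
        - c * (k + 1) * (Q₁.eval t * (Polynomial.derivative^[k-1] (rodW k)).eval t))
        (x / (1 - y)) := by
    intro x
    rw [phiTop_eq k (by omega) x y hy, e1, e2]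
    simp only [dot2, legP, legL, Polynomial.eval_mul, Polynomial.eval_C, Polynomial.eval_sub,
      Polynomial.eval_X, hc]
    ring
  simp only [hf]
  rw [intervalIntegral.integral_comp_div (f := fun t : ℝ => c * ((Polynomial.X * Q₁ - Q₂ : Polynomial ℝ).eval t *
          (Polynomial.derivative^[k] (rodW k)).eval t)
        - c * (k + 1) * (Q₁.eval t * (Polynomial.derivative^[k-1] (rodW k)).eval t)) hs,
    neg_div, div_self hs, intervalIntegral.integral_sub, intervalIntegral.integral_const_mul,
    intervalIntegral.integral_const_mul, rodW_orth k k le_rfl, rodW_orth k (k-1) (by omega)]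
  · simp
  · refine lt_of_le_of_lt Polynomial.degree_le_natDegree ?_
    norm_cast
    omega
  · refine lt_of_le_of_lt Polynomial.degree_le_natDegree ?_
    norm_cast
    have a1 := Polynomial.natDegree_sub_le (Polynomial.X * Q₁) Q₂
    have a2 := Polynomial.natDegree_mul_le (p := Polynomial.X) (q := Q₁)
    rw [Polynomial.natDegree_X] at a2
    have : max (Polynomial.X * Q₁).natDegree Q₂.natDegree ≤ k - 1 := max_le (by omega) (by omega)
    omega
  · exact (continuous_const.mul ((Polynomial.continuous _).mul
      (Polynomial.continuous _))).intervalIntegrable _ _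
  · exact (continuous_const.mul ((Polynomial.continuous _).mul
      (Polynomial.continuous _))).intervalIntegrable _ _

theorem refTriangle_measurable : MeasurableSet refTriangle := by
  apply IsClosed.measurableSet
  have a1 : IsClosed {p : ℝ × ℝ | 0 ≤ p.2} := isClosed_le (by fun_prop) (by fun_prop)
  have a2 : IsClosed {p : ℝ × ℝ | p.2 ≤ 1} := isClosed_le (by fun_prop) (by fun_prop)
  have a3 : IsClosed {p : ℝ × ℝ | |p.1| ≤ 1 - p.2} := isClosed_le (by fun_prop) (by fun_prop)
  exact a1.inter (a2.inter a3)

theorem integral_refTriangle_zero (f : ℝ × ℝ → ℝ)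
    (hf : ∀ y < 1, ∫ x in (-(1 - y))..(1 - y), f (x, y) = 0) :
    ∫ p in refTriangle, f p = 0 := by
  rw [← integral_indicator refTriangle_measurable]
  by_cases hi : Integrable (refTriangle.indicator f) volume
  swap
  · exact integral_undef hi
  rw [Measure.volume_eq_prod] at hi ⊢
  rw [integral_prod_symm _ hi]
  have hz : ∀ y : ℝ, ∫ x, refTriangle.indicator f (x, y) = 0 := by
    intro y
    by_cases hy : 0 ≤ y ∧ y ≤ 1
    · have e : (fun x => refTriangle.indicator f (x, y)) =
          (Set.Icc (-(1 - y)) (1 - y)).indicator (fun x => f (x, y)) := by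
        funext x
        have : (x, y) ∈ refTriangle ↔ x ∈ Set.Icc (-(1 - y)) (1 - y) := by
          simp only [refTriangle, Set.mem_ofPred_eq, hy.1, hy.2, true_and, abs_le, Set.mem_Icc]
        by_cases hx : x ∈ Set.Icc (-(1 - y)) (1 - y)
        · rw [Set.indicator_of_mem hx, Set.indicator_of_mem (this.2 hx)]
        · rw [Set.indicator_of_notMem hx, Set.indicator_of_notMem (fun h => hx (this.1 h))]
      rw [e, integral_indicator measurableSet_Icc, integral_Icc_eq_integral_Ioc,
        ← intervalIntegral.integral_of_le (by linarith [hy.2])]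
      rcases hy.2.lt_or_eq with h | h
      · exact hf y h
      · simp [h]
    · have e : (fun x => refTriangle.indicator f (x, y)) = fun _ => 0 := by
        funext x
        apply Set.indicator_of_notMem
        intro h
        exact hy ⟨h.1, h.2.1⟩
      rw [e]; simp
  simp [hz]

/-- The highest-order edge basis function `φ_k` is `L²(T̂₂)`-orthogonal to all
vector-valued polynomials of total degree at most `k - 2`. -/
theorem phiTop_orthogonal_to_low_order (k : ℕ) (hk : 2 ≤ k)
    (q₁ q₂ : MvPolynomial (Fin 2) ℝ)
    (h₁ : q₁.totalDegree ≤ k - 2) (h₂ : q₂.totalDegree ≤ k - 2) :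
    ∫ p in refTriangle,
        dot2 (phiTop k p)
          (MvPolynomial.eval ![p.1, p.2] q₁, MvPolynomial.eval ![p.1, p.2] q₂) = 0 := by
  exact integral_refTriangle_zero _ fun y hy => inner_zero k hk q₁ q₂ h₁ h₂ y hy
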